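/- arXiv:1911.11402 — 2 statements merged into one kernel-verified Lean document; each statement's English description precedes it below -/
import Mathlib

section
/- Let 1/3 < λ < 1, let a : [0,1] → ℝ be Lipschitz continuous, let g ∈ C^λ₀([0,1];ℝ), and let f : ℝ² → ℝ be continuously differentiable in the first variable and three times continuously differentiable in the second variable, with f, ∂₁f, ∂₂f, ∂₂²f, ∂₂³f all continuous on ℝ². Then for every t ∈ [0,1] the Russo–Vallois symmetric integral ∫₀^t ∂₂f(a_u,g_u) d°g_u exists, and the change-of-variables formula f(a_t,g_t) = f(a_0,g_0) + ∫₀^t ∂₁f(a_u,g_u) a'(u) du + ∫₀^t ∂₂f(a_u,g_u) d°g_u holds, where a' denotes the almost-everywhere defined derivative of the Lipschitz function a. -/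
open Set Filter Topology MeasureTheory

/-- Mean value bound on an unordered interval. -/
lemma abs_sub_le_of_abs_deriv_le {ψ ψ' : ℝ → ℝ} (hψ : ∀ s, HasDerivAt ψ (ψ' s) s)
    {C y z : ℝ} (hC : ∀ s ∈ uIcc y z, |ψ' s| ≤ C) : |ψ z - ψ y| ≤ C * |z - y| :=
  (convex_uIcc y z).norm_image_sub_le_of_norm_hasDerivWithin_le
    (fun s _ => (hψ s).hasDerivWithinAt) hC left_mem_uIcc right_mem_uIcc

/-- Second-order Taylor bounds for a function and its derivative. -/
lemma abs_deriv_taylor_le {φ φ₁ φ₂ φ₃ : ℝ → ℝ} (h₁ : ∀ s, HasDerivAt φ (φ₁ s) s)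
    (h₂ : ∀ s, HasDerivAt φ₁ (φ₂ s) s) (h₃ : ∀ s, HasDerivAt φ₂ (φ₃ s) s)
    {B y z : ℝ} (hB : ∀ s ∈ uIcc y z, |φ₃ s| ≤ B) :
    |φ₁ z - φ₁ y - φ₂ y * (z - y)| ≤ B * |z - y| ^ 2 ∧
    |φ z - φ y - φ₁ y * (z - y) - φ₂ y * (z - y) ^ 2 / 2| ≤ B * |z - y| ^ 3 := by
  have hB0 : 0 ≤ B := (abs_nonneg _).trans (hB y left_mem_uIcc)
  have hle : ∀ s ∈ uIcc y z, |s - y| ≤ |z - y| := fun s hs => by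
    simpa [abs_sub_comm] using abs_sub_left_of_mem_uIcc hs
  have hsub : ∀ s ∈ uIcc y z, uIcc y s ⊆ uIcc y z := fun s hs =>
    uIcc_subset_uIcc_left hs
  have e₂ : ∀ s ∈ uIcc y z, |φ₂ s - φ₂ y| ≤ B * |z - y| := fun s hs =>
    (abs_sub_le_of_abs_deriv_le h₃ fun r hr => hB r (hsub s hs hr)).trans
      (mul_le_mul_of_nonneg_left (hle s hs) hB0)
  have e₁ : ∀ s ∈ uIcc y z, |φ₁ s - φ₁ y - φ₂ y * (s - y)| ≤ B * |z - y| ^ 2 := fun s hs => by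
    have hd : ∀ r, HasDerivAt (fun r => φ₁ r - φ₂ y * (r - y)) (φ₂ r - φ₂ y) r := fun r => by
      refine ((h₂ r).sub (((hasDerivAt_id r).sub_const y).const_mul (φ₂ y))).congr_deriv ?_
      simp
    have := abs_sub_le_of_abs_deriv_le hd fun r hr => e₂ r (hsub s hs hr)
    calc |φ₁ s - φ₁ y - φ₂ y * (s - y)|
        = |φ₁ s - φ₂ y * (s - y) - (φ₁ y - φ₂ y * (y - y))| := by ring_nf
      _ ≤ B * |z - y| * |s - y| := this
      _ ≤ B * |z - y| * |z - y| := mul_le_mul_of_nonneg_left (hle s hs) (by positivity)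
      _ = B * |z - y| ^ 2 := by ring
  refine ⟨e₁ z right_mem_uIcc, ?_⟩
  have hd : ∀ r, HasDerivAt (fun r => φ r - φ₁ y * (r - y) - φ₂ y * (r - y) ^ 2 / 2)
      (φ₁ r - φ₁ y - φ₂ y * (r - y)) r := fun r => by
    have hr := (hasDerivAt_id r).sub_const y
    refine (((h₁ r).sub (hr.const_mul (φ₁ y))).sub
      (((hr.pow 2).const_mul (φ₂ y)).div_const 2)).congr_deriv ?_
    simp; ring
  have := abs_sub_le_of_abs_deriv_le hd e₁
  calc |φ z - φ y - φ₁ y * (z - y) - φ₂ y * (z - y) ^ 2 / 2|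
      = |φ z - φ₁ y * (z - y) - φ₂ y * (z - y) ^ 2 / 2
          - (φ y - φ₁ y * (y - y) - φ₂ y * (y - y) ^ 2 / 2)| := by ring_nf
    _ ≤ B * |z - y| ^ 2 * |z - y| := this
    _ = B * |z - y| ^ 3 := by ring

lemma abs_trapezoid_sub_le {φ φ₁ φ₂ φ₃ : ℝ → ℝ} (h₁ : ∀ s, HasDerivAt φ (φ₁ s) s)
    (h₂ : ∀ s, HasDerivAt φ₁ (φ₂ s) s) (h₃ : ∀ s, HasDerivAt φ₂ (φ₃ s) s)
    {B y z : ℝ} (hB : ∀ s ∈ uIcc y z, |φ₃ s| ≤ B) :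
    |φ z - φ y - (φ₁ z + φ₁ y) / 2 * (z - y)| ≤ 2 * B * |z - y| ^ 3 := by
  obtain ⟨e₁, e₂⟩ := abs_deriv_taylor_le h₁ h₂ h₃ hB
  have hB0 : 0 ≤ B := (abs_nonneg _).trans (hB y left_mem_uIcc)
  have h0 : 0 ≤ B * |z - y| ^ 3 := by positivity
  calc |φ z - φ y - (φ₁ z + φ₁ y) / 2 * (z - y)|
      = |(φ z - φ y - φ₁ y * (z - y) - φ₂ y * (z - y) ^ 2 / 2)
          - (φ₁ z - φ₁ y - φ₂ y * (z - y)) * (z - y) / 2| := by ring_nf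
    _ ≤ B * |z - y| ^ 3 + B * |z - y| ^ 2 * |z - y| / 2 := by
        refine (abs_sub _ _).trans (add_le_add e₂ ?_)
        rw [abs_div, abs_mul, abs_two]; gcongr
    _ ≤ 2 * B * |z - y| ^ 3 := by linarith [show B * |z - y| ^ 2 * |z - y| = B * |z - y| ^ 3 by ring]

lemma abs_central_difference_sub_le {φ φ₁ φ₂ φ₃ : ℝ → ℝ} (h₁ : ∀ s, HasDerivAt φ (φ₁ s) s)
    (h₂ : ∀ s, HasDerivAt φ₁ (φ₂ s) s) (h₃ : ∀ s, HasDerivAt φ₂ (φ₃ s) s)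
    {B y δ : ℝ} (hδ : 0 ≤ δ) (hB : ∀ s ∈ Icc (y - δ) (y + δ), |φ₃ s| ≤ B) :
    |φ (y + δ) - φ (y - δ) - 2 * δ * φ₁ y| ≤ 2 * B * δ ^ 3 := by
  have hy : y ∈ Icc (y - δ) (y + δ) := ⟨by linarith, by linarith⟩
  have e₁ := (abs_deriv_taylor_le h₁ h₂ h₃ fun s hs =>
    hB s (uIcc_subset_Icc hy (right_mem_Icc.2 (by linarith)) hs)).2
  have e₂ := (abs_deriv_taylor_le h₁ h₂ h₃ fun s hs =>
    hB s (uIcc_subset_Icc hy (left_mem_Icc.2 (by linarith)) hs)).2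
  rw [show y + δ - y = δ by ring, abs_of_nonneg hδ, abs_le] at e₁
  rw [show y - δ - y = -δ by ring, abs_neg, abs_of_nonneg hδ, abs_le] at e₂
  rw [abs_le]
  constructor <;> nlinarith [e₁.1, e₁.2, e₂.1, e₂.2]

/-- A function that is `C¹` in the first variable and `C³` in the second has a second partial
derivative which is `2/3`-Hölder in the first variable. -/
lemma abs_sub_le_rpow_two_thirds {F F₁ F₂ F₂₂ F₂₂₂ : ℝ → ℝ → ℝ}
    (hF₁ : ∀ x y, HasDerivAt (fun x => F x y) (F₁ x y) x)
    (hF₂ : ∀ x y, HasDerivAt (F x) (F₂ x y) y)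
    (hF₂₂ : ∀ x y, HasDerivAt (F₂ x) (F₂₂ x y) y)
    (hF₂₂₂ : ∀ x y, HasDerivAt (F₂₂ x) (F₂₂₂ x y) y)
    {M B K ε : ℝ} (hε : 0 < ε) (hε1 : ε ≤ 1)
    (hB₁ : ∀ x ∈ Icc (-(M + 1)) (M + 1), ∀ y ∈ Icc (-(M + 1)) (M + 1), |F₁ x y| ≤ B)
    (hB₃ : ∀ x ∈ Icc (-(M + 1)) (M + 1), ∀ y ∈ Icc (-(M + 1)) (M + 1), |F₂₂₂ x y| ≤ B)
    {x x' y : ℝ} (hx : x ∈ Icc (-M) M) (hx' : x' ∈ Icc (-M) M) (hy : y ∈ Icc (-M) M)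
    (hxx : |x' - x| ≤ K * ε) :
    |F₂ x' y - F₂ x y| ≤ B * (K + 2) * ε ^ (2 / 3 : ℝ) := by
  set δ : ℝ := ε ^ (1 / 3 : ℝ) with hδdef
  have hδ : 0 < δ := Real.rpow_pos_of_pos hε _
  have hδ1 : δ ≤ 1 := Real.rpow_le_one hε.le hε1 (by norm_num)
  have hδ3 : δ ^ 3 = ε := by
    rw [hδdef, ← Real.rpow_natCast, ← Real.rpow_mul hε.le]; norm_num
  have hδ2 : ε ^ (2 / 3 : ℝ) = δ ^ 2 := by
    rw [hδdef, ← Real.rpow_natCast, ← Real.rpow_mul hε.le]; norm_num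
  have hbox : Icc (-M) M ⊆ Icc (-(M + 1)) (M + 1) := Icc_subset_Icc (by linarith) (by linarith)
  have hyδ : Icc (y - δ) (y + δ) ⊆ Icc (-(M + 1)) (M + 1) :=
    Icc_subset_Icc (by linarith [hy.1]) (by linarith [hy.2])
  have hB0 : 0 ≤ B := (abs_nonneg _).trans (hB₁ x (hbox hx) y (hbox hy))
  have c := abs_central_difference_sub_le (hF₂ x) (hF₂₂ x) (hF₂₂₂ x) hδ.le
    fun s hs => hB₃ x (hbox hx) s (hyδ hs)
  have c' := abs_central_difference_sub_le (hF₂ x') (hF₂₂ x') (hF₂₂₂ x') hδ.le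
    fun s hs => hB₃ x' (hbox hx') s (hyδ hs)
  have hinc : ∀ w ∈ Icc (y - δ) (y + δ), |F x' w - F x w| ≤ B * (K * δ ^ 3) := fun w hw => by
    rw [hδ3]
    refine (abs_sub_le_of_abs_deriv_le (fun s => hF₁ s w) fun s hs => hB₁ s
      (hbox (uIcc_subset_Icc hx hx' hs)) w (hyδ hw)).trans ?_
    gcongr
  have i₁ := hinc (y + δ) ⟨by linarith, le_rfl⟩
  have i₂ := hinc (y - δ) ⟨le_rfl, by linarith⟩
  rw [hδ2]
  rw [abs_le] at c c' i₁ i₂ ⊢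
  constructor
  · refine le_of_mul_le_mul_left ?_ hδ
    nlinarith [c.1, c.2, c'.1, c'.2, i₁.1, i₁.2, i₂.1, i₂.2]
  · refine le_of_mul_le_mul_left ?_ hδ
    nlinarith [c.1, c.2, c'.1, c'.2, i₁.1, i₁.2, i₂.1, i₂.2]

/-- Average forward increments of a continuous function converge to the increment. -/
lemma tendsto_integral_forward_difference {h : ℝ → ℝ} (hh : Continuous h) (t : ℝ) :
    Tendsto (fun ε : ℝ => ∫ u in (0 : ℝ)..t, (h (u + ε) - h u) / ε) (𝓝[>] 0)
      (𝓝 (h t - h 0)) := by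
  have key : ∀ s : ℝ, Tendsto (fun ε : ℝ => ε⁻¹ * ∫ u in s..(s + ε), h u) (𝓝[>] 0) (𝓝 (h s)) := by
    intro s
    have := (hh.integral_hasStrictDerivAt s s).hasDerivAt.tendsto_slope_zero_right
    simpa using this
  refine ((key t).sub (key 0)).congr fun ε => ?_
  have hi : ∀ p q : ℝ, IntervalIntegrable h volume p q := fun p q => hh.intervalIntegrable p q
  rw [intervalIntegral.integral_div, intervalIntegral.integral_sub
    ((show Continuous fun u => h (u + ε) by fun_prop).intervalIntegrable _ _) (hi _ _),
    intervalIntegral.integral_comp_add_right]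
  have h2 := intervalIntegral.integral_add_adjacent_intervals (hi 0 ε) (hi ε (t + ε))
  have h3 := intervalIntegral.integral_add_adjacent_intervals (hi 0 t) (hi t (t + ε))
  rw [zero_add, div_eq_inv_mul, ← mul_sub]; congr 1; linarith

lemma tendsto_integral_first_variable {F F₁ : ℝ → ℝ → ℝ}
    (hF₁ : ∀ x y, HasDerivAt (fun x => F x y) (F₁ x y) x)
    (hF : Continuous fun p : ℝ × ℝ => F p.1 p.2) (hF₁c : Continuous fun p : ℝ × ℝ => F₁ p.1 p.2)
    {A G : ℝ → ℝ} {K : NNReal} (hA : LipschitzWith K A) (hG : Continuous G) {M B : ℝ}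
    (hAM : ∀ u, A u ∈ Icc (-M) M) (hGM : ∀ u, G u ∈ Icc (-M) M)
    (hB : ∀ x ∈ Icc (-M) M, ∀ y ∈ Icc (-M) M, |F₁ x y| ≤ B) (t : ℝ) :
    Tendsto (fun ε : ℝ => ∫ u in (0 : ℝ)..t,
        (F (A (u + ε)) (G (u + ε)) - F (A u) (G (u + ε))) / ε) (𝓝[>] 0)
      (𝓝 (∫ u in (0 : ℝ)..t, F₁ (A u) (G u) * deriv A u)) := by
  have hAc := hA.continuous
  have hB0 : 0 ≤ B := (abs_nonneg _).trans (hB _ (hAM 0) _ (hGM 0))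
  refine intervalIntegral.tendsto_integral_filter_of_dominated_convergence (fun _ => B * K) ?_ ?_
    intervalIntegrable_const ?_
  · refine Eventually.of_forall fun ε => Continuous.aestronglyMeasurable ?_
    have e₁ : Continuous fun u => F (A (u + ε)) (G (u + ε)) :=
      hF.comp (f := fun u => (A (u + ε), G (u + ε))) (by fun_prop)
    have e₂ : Continuous fun u => F (A u) (G (u + ε)) :=
      hF.comp (f := fun u => (A u, G (u + ε))) (by fun_prop)
    fun_prop
  · filter_upwards [self_mem_nhdsWithin] with ε hε
    refine Eventually.of_forall fun u _ => ?_
    have hε : 0 < ε := hε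
    rw [Real.norm_eq_abs, abs_div, abs_of_pos hε, div_le_iff₀ hε]
    refine (abs_sub_le_of_abs_deriv_le (fun s => hF₁ s _) fun s hs =>
      hB s (uIcc_subset_Icc (hAM _) (hAM _) hs) _ (hGM _)).trans ?_
    have := hA.dist_le_mul (u + ε) u
    rw [Real.dist_eq, Real.dist_eq, add_sub_cancel_left, abs_of_pos hε] at this
    rw [mul_assoc]
    exact mul_le_mul_of_nonneg_left this hB0
  · filter_upwards [hA.ae_differentiableAt_real] with u hu _
    let Φ : ℝ × ℝ → ℝ := fun p => ∫ s in (0 : ℝ)..1, F₁ (A u + s * (p.1 - A u)) p.2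
    have hΦ : Continuous Φ := by
      refine intervalIntegral.continuous_parametric_intervalIntegral_of_continuous'
        (f := fun (p : ℝ × ℝ) s => F₁ (A u + s * (p.1 - A u)) p.2) ?_ 0 1
      exact hF₁c.comp (f := fun q : (ℝ × ℝ) × ℝ => (A u + q.2 * (q.1.1 - A u), q.1.2))
        (by fun_prop)
    have hrep : ∀ x y, F x y - F (A u) y = (x - A u) * Φ (x, y) := by
      intro x y
      have hd : ∀ s ∈ uIcc (0 : ℝ) 1, HasDerivAt (fun s => F (A u + s * (x - A u)) y)
          (F₁ (A u + s * (x - A u)) y * (x - A u)) s := fun s _ => by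
        have hl : HasDerivAt (fun s => A u + s * (x - A u)) (x - A u) s := by
          simpa using ((hasDerivAt_id s).mul_const (x - A u)).const_add (A u)
        exact (hF₁ (A u + s * (x - A u)) y).comp s hl
      have hc : Continuous fun s => F₁ (A u + s * (x - A u)) y :=
        hF₁c.comp (f := fun s : ℝ => (A u + s * (x - A u), y)) (by fun_prop)
      have := intervalIntegral.integral_eq_sub_of_hasDerivAt hd
        ((hc.mul continuous_const).intervalIntegrable _ _)
      rw [intervalIntegral.integral_mul_const] at this
      simp only [one_mul, zero_mul, add_zero, add_sub_cancel] at this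
      rw [← this, mul_comm]
    have hlim : Tendsto (fun ε => Φ (A (u + ε), G (u + ε))) (𝓝[>] 0) (𝓝 (Φ (A u, G u))) := by
      have hc : Continuous fun ε => Φ (A (u + ε), G (u + ε)) :=
        hΦ.comp (f := fun ε => (A (u + ε), G (u + ε))) (by fun_prop)
      simpa using (hc.tendsto 0).mono_left nhdsWithin_le_nhds
    have hΦu : Φ (A u, G u) = F₁ (A u) (G u) := by simp [Φ]
    rw [← hΦu]
    refine (hlim.mul hu.hasDerivAt.tendsto_slope_zero_right).congr fun ε => ?_
    rw [hrep, smul_eq_mul]; ring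

lemma tendsto_symmetric_integral {F F₁ F₂ F₂₂ F₂₂₂ : ℝ → ℝ → ℝ}
    (hF₁ : ∀ x y, HasDerivAt (fun x => F x y) (F₁ x y) x)
    (hF₂ : ∀ x y, HasDerivAt (F x) (F₂ x y) y)
    (hF₂₂ : ∀ x y, HasDerivAt (F₂ x) (F₂₂ x y) y)
    (hF₂₂₂ : ∀ x y, HasDerivAt (F₂₂ x) (F₂₂₂ x y) y)
    (hF : Continuous fun p : ℝ × ℝ => F p.1 p.2) (hF₁c : Continuous fun p : ℝ × ℝ => F₁ p.1 p.2)
    (hF₂c : Continuous fun p : ℝ × ℝ => F₂ p.1 p.2)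
    (hF₂₂₂c : Continuous fun p : ℝ × ℝ => F₂₂₂ p.1 p.2)
    {A G : ℝ → ℝ} {K : NNReal} (hA : LipschitzWith K A) (hG : Continuous G) {M C lam : ℝ}
    (hlam : 1 / 3 < lam) (hC : ∀ s t, |G t - G s| ≤ C * |t - s| ^ lam)
    (hAM : ∀ u, A u ∈ Icc (-M) M) (hGM : ∀ u, G u ∈ Icc (-M) M) (t : ℝ) :
    Tendsto (fun ε : ℝ => ∫ u in (0 : ℝ)..t,
        ((F₂ (A (u + ε)) (G (u + ε)) + F₂ (A u) (G u)) / 2) * ((G (u + ε) - G u) / ε)) (𝓝[>] 0)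
      (𝓝 (F (A t) (G t) - F (A 0) (G 0) - ∫ u in (0 : ℝ)..t, F₁ (A u) (G u) * deriv A u)) := by
  have hAc := hA.continuous
  have hbound : ∀ H : ℝ → ℝ → ℝ, Continuous (fun p : ℝ × ℝ => H p.1 p.2) →
      ∃ b, ∀ x ∈ Icc (-(M + 1)) (M + 1), ∀ y ∈ Icc (-(M + 1)) (M + 1), |H x y| ≤ b := by
    intro H hH
    obtain ⟨b, hb⟩ := ((isCompact_Icc (a := -(M + 1)) (b := M + 1)).prod
      (isCompact_Icc (a := -(M + 1)) (b := M + 1))).exists_bound_of_continuousOn hH.continuousOn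
    exact ⟨b, fun x hx y hy => hb (x, y) ⟨hx, hy⟩⟩
  obtain ⟨b₁, hb₁⟩ := hbound F₁ hF₁c
  obtain ⟨b₃, hb₃⟩ := hbound F₂₂₂ hF₂₂₂c
  set B := max b₁ b₃
  have hB₁ : ∀ x ∈ Icc (-(M + 1)) (M + 1), ∀ y ∈ Icc (-(M + 1)) (M + 1), |F₁ x y| ≤ B :=
    fun x hx y hy => (hb₁ x hx y hy).trans (le_max_left _ _)
  have hB₃ : ∀ x ∈ Icc (-(M + 1)) (M + 1), ∀ y ∈ Icc (-(M + 1)) (M + 1), |F₂₂₂ x y| ≤ B :=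
    fun x hx y hy => (hb₃ x hx y hy).trans (le_max_right _ _)
  have hbox : Icc (-M) M ⊆ Icc (-(M + 1)) (M + 1) := Icc_subset_Icc (by linarith) (by linarith)
  have hB0 : 0 ≤ B := (abs_nonneg _).trans (hB₁ _ (hbox (hAM 0)) _ (hbox (hGM 0)))
  have hC0 : 0 ≤ C := by simpa using (abs_nonneg _).trans (hC 0 1)
  let E : ℝ → ℝ → ℝ := fun ε u => (F (A u) (G (u + ε)) - F (A u) (G u)) / ε
    - ((F₂ (A (u + ε)) (G (u + ε)) + F₂ (A u) (G u)) / 2) * ((G (u + ε) - G u) / ε)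
  have c₁ : ∀ ε, Continuous fun u => F (A (u + ε)) (G (u + ε)) := fun ε =>
    hF.comp (f := fun u => (A (u + ε), G (u + ε))) (by fun_prop)
  have c₂ : ∀ ε, Continuous fun u => F (A u) (G (u + ε)) := fun ε =>
    hF.comp (f := fun u => (A u, G (u + ε))) (by fun_prop)
  have c₃ : Continuous fun u => F (A u) (G u) := hF.comp (f := fun u => (A u, G u)) (by fun_prop)
  have c₄ : ∀ ε, Continuous fun u => F₂ (A (u + ε)) (G (u + ε)) := fun ε =>
    hF₂c.comp (f := fun u => (A (u + ε), G (u + ε))) (by fun_prop)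
  have c₅ : Continuous fun u => F₂ (A u) (G u) := hF₂c.comp (f := fun u => (A u, G u)) (by fun_prop)
  have hE : Tendsto (fun ε => ∫ u in (0 : ℝ)..t, E ε u) (𝓝[>] 0) (𝓝 0) := by
    have hpow : ∀ r : ℝ, 0 < r → Tendsto (fun ε : ℝ => ε ^ r) (𝓝[>] 0) (𝓝 0) := fun r hr => by
      have := (Real.continuousAt_rpow_const 0 r (Or.inr hr.le)).tendsto
      rw [Real.zero_rpow hr.ne'] at this
      exact this.mono_left nhdsWithin_le_nhds
    have hlim : Tendsto (fun ε : ℝ => (2 * B * C ^ 3 * ε ^ (3 * lam - 1)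
        + B * (K + 2) * C / 2 * ε ^ (lam - 1 / 3)) * |t - 0|) (𝓝[>] 0) (𝓝 0) := by
      simpa using (((hpow (3 * lam - 1) (by linarith)).const_mul (2 * B * C ^ 3)).add
        ((hpow (lam - 1 / 3) (by linarith)).const_mul (B * (K + 2) * C / 2))).mul_const |t - 0|
    refine squeeze_zero_norm' ?_ hlim
    filter_upwards [Ioc_mem_nhdsGT (zero_lt_one (α := ℝ))] with ε hε
    refine intervalIntegral.norm_integral_le_of_norm_le_const fun u _ => ?_
    have hε0 : 0 < ε := hε.1
    have hΔ : |G (u + ε) - G u| ≤ C * ε ^ lam := by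
      simpa [abs_of_pos hε0] using hC u (u + ε)
    have hΔA : |A (u + ε) - A u| ≤ K * ε := by
      simpa [Real.dist_eq, abs_of_pos hε0] using hA.dist_le_mul (u + ε) u
    have htrap : |F (A u) (G (u + ε)) - F (A u) (G u)
        - (F₂ (A u) (G (u + ε)) + F₂ (A u) (G u)) / 2 * (G (u + ε) - G u)|
        ≤ 2 * B * (C * ε ^ lam) ^ 3 :=
      (abs_trapezoid_sub_le (hF₂ (A u)) (hF₂₂ (A u)) (hF₂₂₂ (A u)) fun s hs =>
        hB₃ _ (hbox (hAM u)) s (hbox (uIcc_subset_Icc (hGM _) (hGM _) hs))).trans (by gcongr)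
    have hhol := abs_sub_le_rpow_two_thirds hF₁ hF₂ hF₂₂ hF₂₂₂ hε0 hε.2 hB₁ hB₃
      (hAM u) (hAM (u + ε)) (hGM (u + ε)) hΔA
    have hEeq : E ε u = ((F (A u) (G (u + ε)) - F (A u) (G u)
        - (F₂ (A u) (G (u + ε)) + F₂ (A u) (G u)) / 2 * (G (u + ε) - G u))
        - (F₂ (A (u + ε)) (G (u + ε)) - F₂ (A u) (G (u + ε))) * (G (u + ε) - G u) / 2) / ε := by
      simp only [E]; ring
    have p₁ : (ε ^ lam) ^ 3 = ε ^ (3 * lam - 1) * ε := by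
      rw [← Real.rpow_natCast, ← Real.rpow_mul hε0.le, ← Real.rpow_add_one hε0.ne']
      congr 1; push_cast; ring
    have p₂ : ε ^ (2 / 3 : ℝ) * ε ^ lam = ε ^ (lam - 1 / 3) * ε := by
      rw [← Real.rpow_add hε0, ← Real.rpow_add_one hε0.ne']
      congr 1; ring
    rw [hEeq, Real.norm_eq_abs, abs_div, abs_of_pos hε0, div_le_iff₀ hε0]
    calc _ ≤ 2 * B * (C * ε ^ lam) ^ 3
          + B * (K + 2) * ε ^ (2 / 3 : ℝ) * (C * ε ^ lam) / 2 := by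
          refine (abs_sub _ _).trans (add_le_add htrap ?_)
          rw [abs_div, abs_mul, abs_two]; gcongr
      _ = 2 * B * C ^ 3 * (ε ^ lam) ^ 3
          + B * (K + 2) * C / 2 * (ε ^ (2 / 3 : ℝ) * ε ^ lam) := by ring
      _ = _ := by rw [p₁, p₂]; ring
  have hlim := ((tendsto_integral_forward_difference c₃ t).sub
    (tendsto_integral_first_variable hF₁ hF hF₁c hA hG hAM hGM
      (fun x hx y hy => hB₁ x (hbox hx) y (hbox hy)) t)).sub hE
  rw [sub_zero] at hlim
  refine hlim.congr fun ε => ?_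
  rw [← intervalIntegral.integral_sub, ← intervalIntegral.integral_sub]
  · refine intervalIntegral.integral_congr fun u _ => ?_
    simp only [E]; ring
  all_goals
    refine Continuous.intervalIntegrable ?_ _ _
    have := c₁ ε
    have := c₂ ε
    have := c₄ ε
    fun_prop

/-- The Russo–Vallois symmetric integral `∫₀ᵗ f dᵒg = I`: the limit, as `ε ↓ 0`, of
`∫₀ᵗ ((f((u+ε)∧t) + f u)/2) · ((g((u+ε)∧t) − g u)/ε) du`. -/
def HasSymmInt (f g : ℝ → ℝ) (t : ℝ) (I : ℝ) : Prop :=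
  Filter.Tendsto
    (fun ε : ℝ =>
      ∫ u in (0:ℝ)..t, ((f (min (u + ε) t) + f u) / 2) * ((g (min (u + ε) t) - g u) / ε))
    (nhdsWithin 0 (Set.Ioi 0)) (nhds I)

theorem stmt0
    (lam : ℝ) (hlam1 : 1/3 < lam) (hlam2 : lam < 1)
    (a : ℝ → ℝ) (K : NNReal) (ha : LipschitzOnWith K a (Set.Icc 0 1))
    (g : ℝ → ℝ) (Cg : ℝ)
    (hg : ∀ s ∈ Set.Icc (0:ℝ) 1, ∀ t ∈ Set.Icc (0:ℝ) 1, |g t - g s| ≤ Cg * |t - s| ^ lam)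
    (hg0 : g 0 = 0)
    (f : ℝ → ℝ → ℝ)
    (hfd1 : ∀ y : ℝ, Differentiable ℝ (fun x => f x y))
    (hfd2 : ∀ x : ℝ, ContDiff ℝ 3 (f x))
    (hfc : Continuous fun p : ℝ × ℝ => f p.1 p.2)
    (hfc1 : Continuous fun p : ℝ × ℝ => deriv (fun x => f x p.2) p.1)
    (hfc2 : Continuous fun p : ℝ × ℝ => deriv (f p.1) p.2)
    (hfc22 : Continuous fun p : ℝ × ℝ => deriv (deriv (f p.1)) p.2)
    (hfc222 : Continuous fun p : ℝ × ℝ => deriv (deriv (deriv (f p.1))) p.2) :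
    ∀ t ∈ Set.Icc (0:ℝ) 1, ∃ I : ℝ,
      HasSymmInt (fun u => deriv (f (a u)) (g u)) g t I ∧
      f (a t) (g t) = f (a 0) (g 0)
        + (∫ u in (0:ℝ)..t, deriv (fun x => f x (g u)) (a u) * deriv a u) + I := by
  intro t ht
  let P : ℝ → ℝ := fun u => projIcc 0 t ht.1 u
  have hPt : ∀ u, P u ∈ Icc 0 t := fun u => (projIcc 0 t ht.1 u).2
  have hP1 : ∀ u, P u ∈ Icc (0 : ℝ) 1 := fun u => ⟨(hPt u).1, (hPt u).2.trans ht.2⟩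
  have hPid : ∀ u ∈ Icc 0 t, P u = u := fun u hu => by simp only [P, projIcc_of_mem ht.1 hu]
  have hPmin : ∀ u, 0 ≤ u → P u = min u t := fun u hu => by
    simp [P, coe_projIcc, min_comm, hu, ht.1]
  have hPlip : ∀ u v, |P u - P v| ≤ |u - v| := fun u v => by
    simpa [Real.dist_eq, Subtype.dist_eq] using (LipschitzWith.projIcc ht.1).dist_le_mul u v
  have h01 : (0 : ℝ) ∈ Icc (0 : ℝ) 1 := ⟨le_rfl, zero_le_one⟩
  have hC0 : 0 ≤ Cg := by simpa using (abs_nonneg _).trans (hg 0 h01 1 ⟨zero_le_one, le_rfl⟩)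
  have hlam0 : 0 < lam := by linarith
  have hA : LipschitzWith K fun u => a (P u) := LipschitzWith.of_dist_le_mul fun u v =>
    (ha.dist_le_mul _ (hP1 u) _ (hP1 v)).trans
      (mul_le_mul_of_nonneg_left (hPlip u v) K.2)
  have hG : ∀ s r, |g (P r) - g (P s)| ≤ Cg * |r - s| ^ lam := fun s r =>
    (hg _ (hP1 s) _ (hP1 r)).trans (mul_le_mul_of_nonneg_left
      (Real.rpow_le_rpow (abs_nonneg _) (hPlip r s) hlam0.le) hC0)
  have hGc : Continuous fun u => g (P u) := continuous_iff_continuousAt.2 fun s => by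
    refine tendsto_iff_dist_tendsto_zero.2 (squeeze_zero (fun _ => dist_nonneg)
      (hG s) ?_)
    have hc : Continuous fun r : ℝ => Cg * |r - s| ^ lam :=
      continuous_const.mul ((continuous_id.sub continuous_const).abs.rpow_const
        fun _ => Or.inr hlam0.le)
    simpa [Real.zero_rpow hlam0.ne'] using hc.tendsto s
  have hAM : ∀ u, a (P u) ∈ Icc (-(|a 0| + K + Cg)) (|a 0| + K + Cg) := fun u => by
    have h := ha.dist_le_mul _ (hP1 u) _ h01
    rw [Real.dist_eq, Real.dist_eq, sub_zero, abs_of_nonneg (hP1 u).1] at h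
    have h' : |a (P u) - a 0| ≤ K := h.trans (mul_le_of_le_one_right K.2 (hP1 u).2)
    have := abs_le.1 h'
    have := neg_abs_le (a 0)
    have := le_abs_self (a 0)
    constructor <;> linarith
  have hGM : ∀ u, g (P u) ∈ Icc (-(|a 0| + K + Cg)) (|a 0| + K + Cg) := fun u => by
    have h := hg _ h01 _ (hP1 u)
    rw [hg0, sub_zero, sub_zero, abs_of_nonneg (hP1 u).1] at h
    have h' : |g (P u)| ≤ Cg := h.trans
      (mul_le_of_le_one_right hC0 (Real.rpow_le_one (hP1 u).1 (hP1 u).2 hlam0.le))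
    have := abs_le.1 h'
    have := abs_nonneg (a 0)
    have : (0 : ℝ) ≤ K := K.2
    constructor <;> linarith
  have hd₁ : ∀ x, ContDiff ℝ 2 (deriv (f x)) := fun x =>
    ((contDiff_succ_iff_deriv (n := 2)).1 (hfd2 x)).2.2
  have hd₂ : ∀ x, ContDiff ℝ 1 (deriv (deriv (f x))) := fun x =>
    ((contDiff_succ_iff_deriv (n := 1)).1 (hd₁ x)).2.2
  have main := tendsto_symmetric_integral (F := f)
    (fun x y => (hfd1 y x).hasDerivAt)
    (fun x y => ((hfd2 x).differentiable (by norm_num) y).hasDerivAt)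
    (fun x y => ((hd₁ x).differentiable (by norm_num) y).hasDerivAt)
    (fun x y => ((hd₂ x).differentiable (by norm_num) y).hasDerivAt)
    hfc hfc1 hfc2 hfc222 hA hGc hlam1 hG hAM hGM t
  have hint : ∫ u in (0 : ℝ)..t, deriv (fun x => f x (g (P u))) (a (P u)) *
      deriv (fun u => a (P u)) u = ∫ u in (0 : ℝ)..t, deriv (fun x => f x (g u)) (a u) * deriv a u := by
    refine intervalIntegral.integral_congr_ae ?_
    filter_upwards [compl_mem_ae_iff.2 (measure_singleton t)] with u hut hu
    rw [uIoc_of_le ht.1] at hu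
    have hu' : u ∈ Ioo 0 t := ⟨hu.1, lt_of_le_of_ne hu.2 hut⟩
    have hev : (fun u => a (P u)) =ᶠ[𝓝 u] a := by
      filter_upwards [Ioo_mem_nhds hu'.1 hu'.2] with v hv
      rw [hPid v (Ioo_subset_Icc_self hv)]
    rw [hev.deriv_eq, hPid u (Ioo_subset_Icc_self hu')]
  rw [hint, hPid t ⟨ht.1, le_rfl⟩, hPid 0 ⟨le_rfl, ht.1⟩] at main
  refine ⟨_, main.congr' ?_, by ring⟩
  filter_upwards [self_mem_nhdsWithin] with ε hε
  refine intervalIntegral.integral_congr fun u hu => ?_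
  rw [uIcc_of_le ht.1] at hu
  have hε : 0 < ε := hε
  simp only [hPid u hu, hPmin (u + ε) (by linarith [hu.1])]
end

section
/- Let 1/3 < λ < 1, let a : [0,1] → ℝ be Lipschitz continuous, let g ∈ C^λ₀([0,1];ℝ), let t ∈ (0,1], and let f : ℝ² → ℝ be such that f, ∂₁f, ∂₂f and ∂₂²f exist and are continuous on ℝ². Then for any sequence of partitions 0 = t₀ < t₁ < ⋯ < t_n = t of [0,t] whose mesh max{t_k − t_{k−1} : k = 1,…,n} tends to 0, the trapezoidal Riemann sums Σ_{k=1}^n ((f(a_{t_{k−1}},g_{t_{k−1}}) + f(a_{t_k},g_{t_k}))/2)·(g_{t_k} − g_{t_{k−1}}) converge to the Russo–Vallois symmetric integral ∫₀^t f(a_u,g_u) d°g_u (which exists). -/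
open MeasureTheory Set Filter Topology

/-- Second-order Taylor bound on the interval between `x` and `y`. -/
lemma abs_sub_sub_deriv_mul_le {h : ℝ → ℝ} (h1 : Differentiable ℝ h)
    (h2 : Differentiable ℝ (deriv h)) {x y M : ℝ}
    (hM : ∀ z ∈ uIcc x y, |deriv (deriv h) z| ≤ M) {z : ℝ} (hz : z ∈ uIcc x y) :
    |h z - h x - deriv h x * (z - x)| ≤ M * |y - x| ^ 2 := by
  have hsub : ∀ w ∈ uIcc x y, |w - x| ≤ |y - x| := fun w hw => abs_sub_left_of_mem_uIcc hw
  have hM0 : 0 ≤ M := (abs_nonneg _).trans (hM x left_mem_uIcc)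
  have hd : ∀ w ∈ uIcc x y, ‖deriv h w - deriv h x‖ ≤ M * |y - x| := by
    intro w hw
    refine ((convex_uIcc x y).norm_image_sub_le_of_norm_deriv_le
      (fun v _ => h2 v) hM left_mem_uIcc hw).trans ?_
    exact mul_le_mul_of_nonneg_left (hsub w hw) hM0
  have hder : ∀ w ∈ uIcc x y, HasDerivWithinAt (fun w => h w - deriv h x * w)
      (deriv h w - deriv h x) (uIcc x y) w := by
    intro w _
    have := (h1 w).hasDerivAt.sub ((hasDerivAt_id w).const_mul (deriv h x))
    rw [mul_one] at this
    exact this.hasDerivWithinAt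
  have := (convex_uIcc x y).norm_image_sub_le_of_norm_hasDerivWithin_le hder hd left_mem_uIcc hz
  rw [Real.norm_eq_abs, Real.norm_eq_abs] at this
  calc |h z - h x - deriv h x * (z - x)|
      = |h z - deriv h x * z - (h x - deriv h x * x)| := by ring_nf
    _ ≤ M * |y - x| * |z - x| := this
    _ ≤ M * |y - x| * |y - x| := mul_le_mul_of_nonneg_left (hsub z hz) (by positivity)
    _ = M * |y - x| ^ 2 := by ring

/-- Error bound for a single trapezoid. -/
lemma abs_integral_sub_trapezoid_le {h : ℝ → ℝ} (h1 : Differentiable ℝ h)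
    (h2 : Differentiable ℝ (deriv h)) {x y M : ℝ}
    (hM : ∀ z ∈ uIcc x y, |deriv (deriv h) z| ≤ M) :
    |(∫ z in x..y, h z) - (h x + h y) / 2 * (y - x)| ≤ 2 * M * |y - x| ^ 3 := by
  have hM0 : 0 ≤ M := (abs_nonneg _).trans (hM x left_mem_uIcc)
  have hint : (∫ z in x..y, (h z - h x - deriv h x * (z - x)))
      = (∫ z in x..y, h z) - h x * (y - x) - deriv h x * ((y - x) ^ 2 / 2) := by
    have hi : IntervalIntegrable h volume x y := h1.continuous.intervalIntegrable _ _
    rw [intervalIntegral.integral_sub (hi.sub intervalIntegrable_const)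
        (Continuous.intervalIntegrable (by fun_prop) _ _),
      intervalIntegral.integral_sub hi intervalIntegrable_const,
      intervalIntegral.integral_const_mul,
      intervalIntegral.integral_sub (by simp) (by simp)]
    simp
    ring
  have hb : |∫ z in x..y, (h z - h x - deriv h x * (z - x))| ≤ M * |y - x| ^ 2 * |y - x| := by
    rw [← Real.norm_eq_abs]
    exact intervalIntegral.norm_integral_le_of_norm_le_const fun z hz =>
      abs_sub_sub_deriv_mul_le h1 h2 hM (uIoc_subset_uIcc hz)
  have hy : |(h y - h x - deriv h x * (y - x)) / 2 * (y - x)| ≤ M * |y - x| ^ 2 * |y - x| := by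
    rw [abs_mul, abs_div, abs_two]
    gcongr
    have := abs_sub_sub_deriv_mul_le h1 h2 hM right_mem_uIcc
    have := abs_nonneg (h y - h x - deriv h x * (y - x))
    linarith
  calc |(∫ z in x..y, h z) - (h x + h y) / 2 * (y - x)|
      = |(∫ z in x..y, (h z - h x - deriv h x * (z - x)))
          - (h y - h x - deriv h x * (y - x)) / 2 * (y - x)| := by rw [hint]; ring_nf
    _ ≤ _ := (abs_sub _ _).trans (add_le_add hb hy)
    _ = _ := by ring

/-- A trapezoidal product that is, uniformly, an increment of a continuous function `H` up to
`o(r - s)` has `H t - H 0` as its symmetric integral. -/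
lemma hasSymmInt_of_increment {p g H : ℝ → ℝ} (hp : Continuous p) (hg : Continuous g)
    (hH : Continuous H) {t : ℝ} (ht : 0 < t)
    (hT : ∀ η > 0, ∃ δ > 0, ∀ s r, 0 ≤ s → s ≤ r → r ≤ t → r - s < δ →
      |(p s + p r) / 2 * (g r - g s) - (H r - H s)| ≤ η * (r - s)) :
    HasSymmInt p g t (H t - H 0) := by
  have hmain : Tendsto (fun ε : ℝ => H t - (∫ u in (0:ℝ)..ε, H u) / ε) (𝓝[>] 0)
      (𝓝 (H t - H 0)) := by
    have hd : HasDerivAt (fun ε => ∫ u in (0:ℝ)..ε, H u) (H 0) 0 :=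
      intervalIntegral.integral_hasDerivAt_right (hH.intervalIntegrable _ _)
        (hH.stronglyMeasurableAtFilter _ _) hH.continuousAt
    have := hd.tendsto_slope_zero_right
    refine tendsto_const_nhds.sub (this.congr fun ε => ?_)
    simp [div_eq_inv_mul]
  have hincr : ∀ ε, 0 < ε → ε < t →
      (∫ u in (0:ℝ)..t, (H (min (u + ε) t) - H u) / ε) = H t - (∫ u in (0:ℝ)..ε, H u) / ε := by
    intro ε hε hεt
    have hi : ∀ x y, IntervalIntegrable H volume x y := fun x y => hH.intervalIntegrable x y
    have hm : Continuous fun u => H (min (u + ε) t) := by fun_prop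
    have e1 : (∫ u in (0:ℝ)..(t - ε), H (min (u + ε) t)) = ∫ u in ε..t, H u := by
      have : (∫ u in (0:ℝ)..(t - ε), H (u + ε)) = ∫ u in ε..t, H u := by
        rw [intervalIntegral.integral_comp_add_right]; simp
      rw [← this]
      refine intervalIntegral.integral_congr fun u hu => ?_
      rw [uIcc_of_le (by linarith)] at hu
      have : u + ε ≤ t := by linarith [hu.2]
      simp [min_eq_left this]
    have e2 : (∫ u in (t - ε)..t, H (min (u + ε) t)) = ε * H t := by
      have : (∫ u in (t - ε)..t, H (min (u + ε) t)) = ∫ u in (t - ε)..t, H t := by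
        refine intervalIntegral.integral_congr fun u hu => ?_
        rw [uIcc_of_le (by linarith)] at hu
        have : t ≤ u + ε := by linarith [hu.1]
        simp [min_eq_right this]
      rw [this]; simp
    rw [intervalIntegral.integral_div, intervalIntegral.integral_sub
      (hm.intervalIntegrable _ _) (hi _ _),
      ← intervalIntegral.integral_add_adjacent_intervals (hm.intervalIntegrable 0 (t - ε))
        (hm.intervalIntegrable (t - ε) t), e1, e2,
      ← intervalIntegral.integral_add_adjacent_intervals (hi 0 ε) (hi ε t)]
    field_simp
    ring
  have hdiff : Tendsto (fun ε : ℝ =>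
      (∫ u in (0:ℝ)..t, ((p (min (u + ε) t) + p u) / 2) * ((g (min (u + ε) t) - g u) / ε))
        - (H t - (∫ u in (0:ℝ)..ε, H u) / ε)) (𝓝[>] 0) (𝓝 0) := by
    rw [Metric.tendsto_nhds]
    intro η hη
    obtain ⟨δ, hδ, hb⟩ := hT (η / (2 * t)) (by positivity)
    filter_upwards [Ioo_mem_nhdsGT (lt_min hδ ht)] with ε hε
    have hε0 : 0 < ε := hε.1
    have hεδ : ε < δ := hε.2.trans_le (min_le_left _ _)
    rw [← hincr ε hε0 (hε.2.trans_le (min_le_right _ _)), dist_zero_right,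
      ← intervalIntegral.integral_sub (Continuous.intervalIntegrable (by fun_prop) _ _)
        (Continuous.intervalIntegrable (by fun_prop) _ _)]
    refine (intervalIntegral.norm_integral_le_of_norm_le_const (C := η / (2 * t))
      fun u hu => ?_).trans_lt ?_
    · rw [uIoc_of_le ht.le] at hu
      have hle : u ≤ min (u + ε) t := le_min (by linarith) hu.2
      have hlt : min (u + ε) t - u ≤ ε := by linarith [min_le_left (u + ε) t]
      have := hb u (min (u + ε) t) hu.1.le hle (min_le_right _ _) (hlt.trans_lt hεδ)
      have e : (p (min (u + ε) t) + p u) / 2 * ((g (min (u + ε) t) - g u) / ε)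
          - (H (min (u + ε) t) - H u) / ε
          = ((p u + p (min (u + ε) t)) / 2 * (g (min (u + ε) t) - g u)
            - (H (min (u + ε) t) - H u)) / ε := by ring
      rw [e, Real.norm_eq_abs, abs_div, abs_of_pos hε0, div_le_iff₀ hε0]
      exact this.trans (mul_le_mul_of_nonneg_left hlt (by positivity))
    · rw [sub_zero, abs_of_pos ht]
      have : η / (2 * t) * t = η / 2 := by field_simp
      rw [this]; linarith
  have := hdiff.add hmain
  simpa [HasSymmInt] using this

lemma le_of_forall_lt_succ {pts : ℕ → ℝ} {n : ℕ} (hmono : ∀ k < n, pts k < pts (k + 1)) (j k : ℕ)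
    (hjk : j ≤ k) : k ≤ n → pts j ≤ pts k := by
  induction k, hjk using Nat.le_induction with
  | base => exact fun _ => le_rfl
  | succ k _ ih => exact fun hk => (ih (by omega)).trans (hmono k (by omega)).le

/-- Trapezoidal sums of products that are, uniformly, increments of `H` up to `o(r - s)` converge
to `H t - H 0` as the mesh tends to zero. -/
lemma trapezoidal_sums_converge_of_increment {p g H : ℝ → ℝ} {t : ℝ} (ht : 0 < t)
    (hT : ∀ η > 0, ∃ δ > 0, ∀ s r, 0 ≤ s → s ≤ r → r ≤ t → r - s < δ →
      |(p s + p r) / 2 * (g r - g s) - (H r - H s)| ≤ η * (r - s)) :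
    ∀ ε > (0:ℝ), ∃ δ > (0:ℝ), ∀ (n : ℕ) (pts : ℕ → ℝ),
      pts 0 = 0 → pts n = t → (∀ k < n, pts k < pts (k + 1)) →
      (∀ k < n, pts (k + 1) - pts k < δ) →
      |(∑ k ∈ Finset.range n, ((p (pts k) + p (pts (k + 1))) / 2)
          * (g (pts (k + 1)) - g (pts k))) - (H t - H 0)| < ε := by
  intro ε hε
  obtain ⟨δ, hδ, hb⟩ := hT (ε / (2 * t)) (by positivity)
  refine ⟨δ, hδ, fun n pts h0 hn hmono hmesh => ?_⟩
  have hmon := le_of_forall_lt_succ hmono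
  have hH : H t - H 0 = ∑ k ∈ Finset.range n, (H (pts (k + 1)) - H (pts k)) := by
    rw [Finset.sum_range_sub (fun k => H (pts k)), h0, hn]
  rw [hH, ← Finset.sum_sub_distrib]
  calc _ ≤ ∑ k ∈ Finset.range n, ε / (2 * t) * (pts (k + 1) - pts k) := by
        refine (Finset.abs_sum_le_sum_abs _ _).trans (Finset.sum_le_sum fun k hk => ?_)
        have hk : k < n := Finset.mem_range.1 hk
        exact hb _ _ (h0 ▸ hmon 0 k (by omega) hk.le) (hmono k hk).le
          (hn ▸ hmon (k + 1) n hk le_rfl) (hmesh k hk)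
    _ = ε / 2 := by
        rw [← Finset.mul_sum, Finset.sum_range_sub pts, h0, hn]; field_simp; simp
    _ < ε := by linarith

/-- Uniform first-order expansion in the first variable of the primitive of `f` in the second. -/
lemma exists_forall_abs_primitive_sub_le {f : ℝ → ℝ → ℝ}
    (hfd1 : ∀ y : ℝ, Differentiable ℝ (fun x => f x y))
    (hfc : Continuous fun p : ℝ × ℝ => f p.1 p.2)
    (hfc1 : Continuous fun p : ℝ × ℝ => deriv (fun x => f x p.2) p.1) (R : ℝ) {η : ℝ}
    (hη : 0 < η) :
    ∃ δ > 0, ∀ x ∈ Icc (-R) R, ∀ x' ∈ Icc (-R) R, ∀ y ∈ Icc (-R) R, |x' - x| < δ →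
      |(∫ z in (0:ℝ)..y, f x' z) - (∫ z in (0:ℝ)..y, f x z)
        - (∫ z in (0:ℝ)..y, deriv (fun x => f x z) x) * (x' - x)| ≤ η * |x' - x| * R := by
  obtain ⟨δ, hδ, hu⟩ := Metric.uniformContinuousOn_iff.1
    ((isCompact_Icc (a := -R) (b := R)).prod (isCompact_Icc (a := -R) (b := R))
      |>.uniformContinuousOn_of_continuous hfc1.continuousOn) η hη
  refine ⟨δ, hδ, fun x hx x' hx' y hy hxx => ?_⟩
  have hR : |y| ≤ R := abs_le.2 hy
  have hpt : ∀ z ∈ Icc (-R) R,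
      |f x' z - f x z - deriv (fun x => f x z) x * (x' - x)| ≤ η * |x' - x| := by
    intro z hz
    have hder : ∀ w ∈ uIcc x x',
        HasDerivWithinAt (fun w => f w z - deriv (fun x => f x z) x * w)
          (deriv (fun x => f x z) w - deriv (fun x => f x z) x) (uIcc x x') w := by
      intro w _
      have := (hfd1 z w).hasDerivAt.sub ((hasDerivAt_id w).const_mul (deriv (fun x => f x z) x))
      rw [mul_one] at this
      exact this.hasDerivWithinAt
    have hbd : ∀ w ∈ uIcc x x',
        ‖deriv (fun x => f x z) w - deriv (fun x => f x z) x‖ ≤ η := by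
      intro w hw
      have hwI : w ∈ Icc (-R) R := uIcc_subset_Icc hx hx' hw
      have hwx : |w - x| < δ := (abs_sub_left_of_mem_uIcc hw).trans_lt hxx
      have := hu (w, z) ⟨hwI, hz⟩ (x, z) ⟨hx, hz⟩ (by simpa [Prod.dist_eq, Real.dist_eq, hδ])
      rw [dist_eq_norm] at this
      exact this.le
    have := (convex_uIcc x x').norm_image_sub_le_of_norm_hasDerivWithin_le hder hbd
      left_mem_uIcc right_mem_uIcc
    rw [Real.norm_eq_abs, Real.norm_eq_abs] at this
    convert this using 2
    ring
  have hi : ∀ x, IntervalIntegrable (f x) volume 0 y := fun x =>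
    Continuous.intervalIntegrable (hfc.comp (Continuous.prodMk_right x)) _ _
  have hi1 : IntervalIntegrable (fun z => deriv (fun x => f x z) x) volume 0 y :=
    Continuous.intervalIntegrable (hfc1.comp (Continuous.prodMk_right x)) _ _
  rw [← intervalIntegral.integral_mul_const, ← intervalIntegral.integral_sub (hi x') (hi x),
    ← intervalIntegral.integral_sub ((hi x').sub (hi x)) (hi1.mul_const _), ← Real.norm_eq_abs]
  refine (intervalIntegral.norm_integral_le_of_norm_le_const (C := η * |x' - x|)
    fun z hz => ?_).trans ?_
  · have h0 : (0:ℝ) ∈ Icc (-R) R := by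
      have := (abs_nonneg y).trans hR
      constructor <;> linarith
    exact hpt z (uIcc_subset_Icc h0 hy (uIoc_subset_uIcc hz))
  · rw [sub_zero]; gcongr

lemma intervalIntegrable_mul_deriv_of_lipschitzWith {a φ : ℝ → ℝ} {K : NNReal}
    (ha : LipschitzWith K a) (hφ : Continuous φ) (s r : ℝ) :
    IntervalIntegrable (fun v => φ v * deriv a v) volume s r :=
  (ha.lipschitzOnWith.absolutelyContinuousOnInterval.intervalIntegrable_deriv).continuousOn_mul
    hφ.continuousOn

/-- A left-point Riemann–Stieltjes term approximates the integral against a Lipschitz function. -/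
lemma exists_forall_abs_mul_sub_integral_le {a φ : ℝ → ℝ} {K : NNReal}
    (ha : LipschitzWith K a) (hφ : Continuous φ) {η : ℝ} (hη : 0 < η) :
    ∃ δ > 0, ∀ s ∈ Icc (0:ℝ) 1, ∀ r ∈ Icc (0:ℝ) 1, s ≤ r → r - s < δ →
      |φ s * (a r - a s) - ∫ v in s..r, φ v * deriv a v| ≤ η * K * (r - s) := by
  obtain ⟨δ, hδ, hu⟩ := Metric.uniformContinuousOn_iff.1
    ((isCompact_Icc (a := (0:ℝ)) (b := 1)).uniformContinuousOn_of_continuous hφ.continuousOn) η hη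
  refine ⟨δ, hδ, fun s hs r hr hsr hrs => ?_⟩
  have hac : AbsolutelyContinuousOnInterval a s r :=
    ha.lipschitzOnWith.absolutelyContinuousOnInterval
  rw [← hac.integral_deriv_eq_sub, ← intervalIntegral.integral_const_mul,
    ← intervalIntegral.integral_sub (hac.intervalIntegrable_deriv.const_mul _)
      (intervalIntegrable_mul_deriv_of_lipschitzWith ha hφ s r), ← Real.norm_eq_abs]
  refine (intervalIntegral.norm_integral_le_of_norm_le_const (C := η * K)
    fun v hv => ?_).trans_eq (by rw [abs_of_nonneg (sub_nonneg.2 hsr)])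
  rw [uIoc_of_le hsr] at hv
  rw [← sub_mul, norm_mul]
  refine mul_le_mul ?_ (norm_deriv_le_of_lipschitz ha) (norm_nonneg _) hη.le
  have := hu s hs v ⟨hs.1.trans hv.1.le, hv.2.trans hr.2⟩ (by
    rw [Real.dist_eq, abs_sub_comm, abs_of_pos (sub_pos.2 hv.1)]; linarith [hv.2])
  rw [dist_eq_norm] at this
  exact this.le

/-- Increments of a Hölder function of exponent above `1/3` are small, and their cubes are small
compared with the length of the interval. -/
lemma exists_forall_abs_increment_le {g : ℝ → ℝ} {C lam : ℝ} (hlam : 1 / 3 < lam)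
    (hg : ∀ s r : ℝ, |g r - g s| ≤ C * |r - s| ^ lam) {η : ℝ} (hη : 0 < η) :
    ∃ δ > 0, ∀ s r, s ≤ r → r - s < δ →
      |g r - g s| ≤ η ∧ |g r - g s| ^ 3 ≤ η * (r - s) := by
  have t1 : Tendsto (fun x : ℝ => C * x ^ lam) (𝓝 0) (𝓝 0) := by
    have : ContinuousAt (fun x : ℝ => C * x ^ lam) 0 :=
      continuousAt_const.mul (Real.continuousAt_rpow_const _ _ (Or.inr (by linarith)))
    simpa [ContinuousAt, Real.zero_rpow (by linarith : lam ≠ 0)] using this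
  have t2 : Tendsto (fun x : ℝ => C ^ 3 * x ^ (3 * lam - 1)) (𝓝 0) (𝓝 0) := by
    have : ContinuousAt (fun x : ℝ => C ^ 3 * x ^ (3 * lam - 1)) 0 :=
      continuousAt_const.mul (Real.continuousAt_rpow_const _ _ (Or.inr (by linarith)))
    simpa [ContinuousAt, Real.zero_rpow (by linarith : 3 * lam - 1 ≠ 0)] using this
  obtain ⟨δ, hδ, hb⟩ := Metric.eventually_nhds_iff.1
    ((t1.eventually_le_const hη).and (t2.eventually_le_const hη))
  refine ⟨δ, hδ, fun s r hsr hrs => ?_⟩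
  have h0 : 0 ≤ r - s := sub_nonneg.2 hsr
  obtain ⟨b1, b2⟩ := hb (y := r - s) (by rwa [Real.dist_eq, sub_zero, abs_of_nonneg h0])
  have hgrs := hg s r
  rw [abs_of_nonneg h0] at hgrs
  refine ⟨hgrs.trans b1, ?_⟩
  have hpow : ((r - s) ^ lam) ^ 3 = (r - s) ^ (3 * lam - 1) * (r - s) := by
    rw [← Real.rpow_natCast, ← Real.rpow_mul h0]
    rcases h0.eq_or_lt with h | h
    · rw [← h, Real.zero_rpow (by push_cast; linarith), mul_zero]
    · rw [← Real.rpow_add_one h.ne']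
      congr 1
      push_cast
      ring
  calc |g r - g s| ^ 3 ≤ (C * (r - s) ^ lam) ^ 3 := by gcongr
    _ = C ^ 3 * (r - s) ^ (3 * lam - 1) * (r - s) := by rw [mul_pow, hpow]; ring
    _ ≤ η * (r - s) := by gcongr

/-- Trapezoidal products of `f (a, g)` against `g` are, uniformly on `[0, 1]`, increments of a
continuous function up to `o(r - s)`. -/
lemma exists_increment_expansion {a g : ℝ → ℝ} {K : NNReal} {C lam : ℝ} (hlam : 1 / 3 < lam)
    (ha : LipschitzWith K a) (hgc : Continuous g)
    (hg : ∀ s r : ℝ, |g r - g s| ≤ C * |r - s| ^ lam) {f : ℝ → ℝ → ℝ}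
    (hfd1 : ∀ y : ℝ, Differentiable ℝ (fun x => f x y))
    (hfd2 : ∀ x : ℝ, Differentiable ℝ (f x))
    (hfd22 : ∀ x : ℝ, Differentiable ℝ (deriv (f x)))
    (hfc : Continuous fun p : ℝ × ℝ => f p.1 p.2)
    (hfc1 : Continuous fun p : ℝ × ℝ => deriv (fun x => f x p.2) p.1)
    (hfc22 : Continuous fun p : ℝ × ℝ => deriv (deriv (f p.1)) p.2) :
    ∃ H : ℝ → ℝ, Continuous H ∧ ∀ η > 0, ∃ δ > 0, ∀ s ∈ Icc (0:ℝ) 1, ∀ r ∈ Icc (0:ℝ) 1,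
      s ≤ r → r - s < δ →
      |(f (a s) (g s) + f (a r) (g r)) / 2 * (g r - g s) - (H r - H s)| ≤ η * (r - s) := by
  have hac : Continuous a := ha.continuous
  set φ : ℝ → ℝ := fun v => ∫ z in (0:ℝ)..g v, deriv (fun x => f x z) (a v) with hφdef
  have hφ : Continuous φ :=
    intervalIntegral.continuous_parametric_intervalIntegral_of_continuous
      (f := fun v z => deriv (fun x => f x z) (a v))
      (hfc1.comp ((hac.comp continuous_fst).prodMk continuous_snd)) hgc
  have hF : Continuous fun v => ∫ z in (0:ℝ)..g v, f (a v) z :=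
    intervalIntegral.continuous_parametric_intervalIntegral_of_continuous
      (f := fun v z => f (a v) z)
      (hfc.comp ((hac.comp continuous_fst).prodMk continuous_snd)) hgc
  have hi := intervalIntegrable_mul_deriv_of_lipschitzWith ha hφ
  refine ⟨fun u => (∫ z in (0:ℝ)..g u, f (a u) z) - ∫ v in (0:ℝ)..u, φ v * deriv a v,
    hF.sub (intervalIntegral.continuous_primitive hi 0), fun η hη => ?_⟩
  obtain ⟨R₁, hR₁⟩ := (isCompact_Icc (a := (0:ℝ)) (b := 1)).exists_bound_of_continuousOn
    hac.continuousOn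
  obtain ⟨R₂, hR₂⟩ := (isCompact_Icc (a := (0:ℝ)) (b := 1)).exists_bound_of_continuousOn
    hgc.continuousOn
  set R := max R₁ R₂
  have haR : ∀ u ∈ Icc (0:ℝ) 1, a u ∈ Icc (-R) R := fun u hu =>
    abs_le.1 ((hR₁ u hu).trans (le_max_left _ _))
  have hgR : ∀ u ∈ Icc (0:ℝ) 1, g u ∈ Icc (-R) R := fun u hu =>
    abs_le.1 ((hR₂ u hu).trans (le_max_right _ _))
  have hR0 : 0 ≤ R :=
    (norm_nonneg (a 0)).trans ((hR₁ 0 (by simp)).trans (le_max_left _ _))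
  have hQ : IsCompact (Icc (-R) R ×ˢ Icc (-R) R) := isCompact_Icc.prod isCompact_Icc
  obtain ⟨M₁, hM₁⟩ := hQ.exists_bound_of_continuousOn hfc1.continuousOn
  obtain ⟨M₂, hM₂⟩ := hQ.exists_bound_of_continuousOn hfc22.continuousOn
  have hM₁0 : 0 ≤ M₁ := (norm_nonneg _).trans (hM₁ (a 0, g 0) ⟨haR 0 (by simp), hgR 0 (by simp)⟩)
  have hM₂0 : 0 ≤ M₂ := (norm_nonneg _).trans (hM₂ (a 0, g 0) ⟨haR 0 (by simp), hgR 0 (by simp)⟩)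
  set L : ℝ := M₁ * K + 2 * M₂ + K * R + M₁ * K + K
  have hL : 0 ≤ L := by positivity
  set θ := η / (L + 1)
  have hθ : 0 < θ := by positivity
  obtain ⟨δ₁, hδ₁, h₁⟩ := exists_forall_abs_primitive_sub_le hfd1 hfc hfc1 R hθ
  obtain ⟨δ₂, hδ₂, h₂⟩ := exists_forall_abs_mul_sub_integral_le ha hφ hθ
  obtain ⟨δ₃, hδ₃, h₃⟩ := exists_forall_abs_increment_le hlam hg hθ
  refine ⟨min (δ₁ / (K + 1)) (min δ₂ δ₃), by positivity, fun s hs r hr hsr hrs => ?_⟩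
  have h0 : 0 ≤ r - s := sub_nonneg.2 hsr
  have hΔa : |a r - a s| ≤ K * (r - s) := by
    have := ha.dist_le_mul r s
    rwa [Real.dist_eq, Real.dist_eq, abs_of_nonneg h0] at this
  have hΔaδ : |a r - a s| < δ₁ := by
    have := (lt_div_iff₀ (by positivity)).1 (hrs.trans_le (min_le_left _ _))
    nlinarith
  obtain ⟨hΔg, hΔg3⟩ := h₃ s r hsr
    (hrs.trans_le ((min_le_right _ _).trans (min_le_right _ _)))
  have b₂ := h₂ s hs r hr hsr (hrs.trans_le ((min_le_right _ _).trans (min_le_left _ _)))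
  have b₁ : |(∫ z in (0:ℝ)..g r, f (a r) z) - (∫ z in (0:ℝ)..g r, f (a s) z)
      - (∫ z in (0:ℝ)..g r, deriv (fun x => f x z) (a s)) * (a r - a s)|
      ≤ θ * (K * R) * (r - s) :=
    (h₁ _ (haR s hs) _ (haR r hr) _ (hgR r hr) hΔaδ).trans <| by
      calc θ * |a r - a s| * R ≤ θ * (K * (r - s)) * R := by gcongr
        _ = _ := by ring
  have b₃ : |(∫ z in g s..g r, f (a s) z)
      - (f (a s) (g s) + f (a s) (g r)) / 2 * (g r - g s)| ≤ θ * (2 * M₂) * (r - s) := by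
    refine (abs_integral_sub_trapezoid_le (hfd2 _) (hfd22 _) (M := M₂) fun z hz =>
      hM₂ (a s, z) ⟨haR s hs, uIcc_subset_Icc (hgR s hs) (hgR r hr) hz⟩).trans ?_
    calc 2 * M₂ * |g r - g s| ^ 3 ≤ 2 * M₂ * (θ * (r - s)) := by gcongr
      _ = _ := by ring
  have b₄ : |(f (a r) (g r) - f (a s) (g r)) / 2 * (g r - g s)| ≤ θ * (M₁ * K) * (r - s) := by
    have hlip : |f (a r) (g r) - f (a s) (g r)| ≤ M₁ * |a r - a s| :=
      (convex_Icc (-R) R).norm_image_sub_le_of_norm_deriv_le (f := fun x => f x (g r))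
        (fun x _ => hfd1 _ x) (fun x hx => hM₁ (x, g r) ⟨hx, hgR r hr⟩) (haR s hs) (haR r hr)
    rw [abs_mul, abs_div, abs_two]
    calc |f (a r) (g r) - f (a s) (g r)| / 2 * |g r - g s|
        ≤ |f (a r) (g r) - f (a s) (g r)| * |g r - g s| := by
          gcongr
          exact half_le_self (abs_nonneg _)
      _ ≤ (M₁ * (K * (r - s))) * θ := by
          gcongr
          exact hlip.trans (by gcongr)
      _ = _ := by ring
  have hcf : ∀ x y, IntervalIntegrable (f (a s)) volume x y := fun x y =>
    (hfd2 (a s)).continuous.intervalIntegrable x y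
  have hcf1 : ∀ x y, IntervalIntegrable (fun z => deriv (fun x => f x z) (a s)) volume x y :=
    fun x y => Continuous.intervalIntegrable (hfc1.comp (Continuous.prodMk_right (a s))) x y
  have b₅ : |((∫ z in (0:ℝ)..g r, deriv (fun x => f x z) (a s)) - φ s) * (a r - a s)|
      ≤ θ * (M₁ * K) * (r - s) := by
    rw [hφdef, intervalIntegral.integral_interval_sub_left (hcf1 _ _) (hcf1 _ _), abs_mul]
    have : |∫ z in g s..g r, deriv (fun x => f x z) (a s)| ≤ M₁ * |g r - g s| := by
      rw [← Real.norm_eq_abs]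
      exact intervalIntegral.norm_integral_le_of_norm_le_const fun z hz =>
        hM₁ (a s, z) ⟨haR s hs, uIcc_subset_Icc (hgR s hs) (hgR r hr) (uIoc_subset_uIcc hz)⟩
    calc _ ≤ (M₁ * θ) * (K * (r - s)) := by
          gcongr
          exact this.trans (by gcongr)
      _ = _ := by ring
  have e₁ : (∫ z in (0:ℝ)..g r, f (a s) z) - (∫ z in (0:ℝ)..g s, f (a s) z)
      = ∫ z in g s..g r, f (a s) z :=
    intervalIntegral.integral_interval_sub_left (hcf _ _) (hcf _ _)
  have e₂ : (∫ v in (0:ℝ)..r, φ v * deriv a v) - (∫ v in (0:ℝ)..s, φ v * deriv a v)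
      = ∫ v in s..r, φ v * deriv a v :=
    intervalIntegral.integral_interval_sub_left (hi _ _) (hi _ _)
  have hθL : θ * L ≤ η := by
    have : θ * (L + 1) = η := by simp only [θ]; field_simp
    linarith
  refine le_trans ?_ (mul_le_mul_of_nonneg_right hθL h0)
  rw [abs_le] at *
  simp only [L]
  constructor <;> linarith [b₁.1, b₁.2, b₂.1, b₂.2, b₃.1, b₃.2, b₄.1, b₄.2, b₅.1, b₅.2]

theorem stmt2
    (lam : ℝ) (hlam1 : 1/3 < lam) (hlam2 : lam < 1)
    (a : ℝ → ℝ) (K : NNReal) (ha : LipschitzOnWith K a (Set.Icc 0 1))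
    (g : ℝ → ℝ) (Cg : ℝ)
    (hg : ∀ s ∈ Set.Icc (0:ℝ) 1, ∀ t ∈ Set.Icc (0:ℝ) 1, |g t - g s| ≤ Cg * |t - s| ^ lam)
    (hg0 : g 0 = 0)
    (t : ℝ) (ht0 : 0 < t) (ht1 : t ≤ 1)
    (f : ℝ → ℝ → ℝ)
    (hfd1 : ∀ y : ℝ, Differentiable ℝ (fun x => f x y))
    (hfd2 : ∀ x : ℝ, Differentiable ℝ (f x))
    (hfd22 : ∀ x : ℝ, Differentiable ℝ (deriv (f x)))
    (hfc : Continuous fun p : ℝ × ℝ => f p.1 p.2)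
    (hfc1 : Continuous fun p : ℝ × ℝ => deriv (fun x => f x p.2) p.1)
    (hfc2 : Continuous fun p : ℝ × ℝ => deriv (f p.1) p.2)
    (hfc22 : Continuous fun p : ℝ × ℝ => deriv (deriv (f p.1)) p.2) :
    ∃ I : ℝ, HasSymmInt (fun u => f (a u) (g u)) g t I ∧
      ∀ ε > (0:ℝ), ∃ δ > (0:ℝ), ∀ (n : ℕ) (pts : ℕ → ℝ),
        0 < n → pts 0 = 0 → pts n = t →
        (∀ k < n, pts k < pts (k + 1)) →
        (∀ k < n, pts (k + 1) - pts k < δ) →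
        |(∑ k ∈ Finset.range n,
            ((f (a (pts k)) (g (pts k)) + f (a (pts (k + 1))) (g (pts (k + 1)))) / 2)
              * (g (pts (k + 1)) - g (pts k))) - I| < ε := by
  set c : ℝ → ℝ := fun u => (projIcc (0:ℝ) 1 zero_le_one u : ℝ) with hc
  have hcmem : ∀ u, c u ∈ Icc (0:ℝ) 1 := fun u => (projIcc (0:ℝ) 1 zero_le_one u).2
  have hcid : ∀ u ∈ Icc (0:ℝ) 1, c u = u := fun u hu => by
    simp only [hc, projIcc_of_mem zero_le_one hu]
  have hcdist : ∀ s r, |c r - c s| ≤ |r - s| := fun s r => by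
    simpa [Subtype.dist_eq, Real.dist_eq] using
      (LipschitzWith.projIcc (zero_le_one (α := ℝ))).dist_le_mul r s
  have hCg : 0 ≤ Cg := by
    have := (abs_nonneg _).trans (hg 0 (by simp) 1 (by simp))
    simpa using this
  have hgH : ∀ s r, |g (c r) - g (c s)| ≤ Cg * |r - s| ^ lam := fun s r => by
    refine (hg _ (hcmem s) _ (hcmem r)).trans ?_
    exact mul_le_mul_of_nonneg_left
      (Real.rpow_le_rpow (abs_nonneg _) (hcdist s r) (by linarith)) hCg
  have hgc : Continuous fun u => g (c u) := by
    refine continuous_iff_continuousAt.2 fun s => tendsto_iff_dist_tendsto_zero.2 ?_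
    have hlim : Tendsto (fun r : ℝ => Cg * |r - s| ^ lam) (𝓝 s) (𝓝 0) := by
      have : Continuous fun r : ℝ => Cg * |r - s| ^ lam :=
        continuous_const.mul
          ((continuous_id.sub continuous_const).abs.rpow_const fun _ => Or.inr (by linarith))
      simpa [Real.zero_rpow (by linarith : lam ≠ 0)] using this.tendsto s
    exact squeeze_zero (fun _ => dist_nonneg) (fun r => hgH s r) hlim
  have haL : LipschitzWith K fun u => a (c u) := LipschitzWith.of_dist_le_mul fun r s =>
    (ha.dist_le_mul _ (hcmem r) _ (hcmem s)).trans
      (mul_le_mul_of_nonneg_left (hcdist s r) K.2)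
  obtain ⟨H, hH, hexp⟩ :=
    exists_increment_expansion hlam1 haL hgc hgH hfd1 hfd2 hfd22 hfc hfc1 hfc22
  have hT : ∀ η > 0, ∃ δ > 0, ∀ s r, 0 ≤ s → s ≤ r → r ≤ t → r - s < δ →
      |(f (a (c s)) (g (c s)) + f (a (c r)) (g (c r))) / 2 * (g (c r) - g (c s))
        - (H r - H s)| ≤ η * (r - s) := by
    intro η hη
    obtain ⟨δ, hδ, hb⟩ := hexp η hη
    exact ⟨δ, hδ, fun s r hs hsr hrt => hb s ⟨hs, by linarith⟩ r ⟨by linarith, by linarith⟩ hsr⟩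
  refine ⟨H t - H 0, ?_, fun ε hε => ?_⟩
  · have hsymm := hasSymmInt_of_increment (p := fun u => f (a (c u)) (g (c u)))
      (hfc.comp (haL.continuous.prodMk hgc)) hgc hH ht0 hT
    refine hsymm.congr' ?_
    filter_upwards [self_mem_nhdsWithin] with ε hε
    refine intervalIntegral.integral_congr fun u hu => ?_
    rw [uIcc_of_le ht0.le] at hu
    have hε0 : 0 < ε := hε
    have h1 : c u = u := hcid u ⟨hu.1, hu.2.trans ht1⟩
    have h2 : c (min (u + ε) t) = min (u + ε) t :=
      hcid _ ⟨le_min (by linarith [hu.1]) ht0.le, (min_le_right _ _).trans ht1⟩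
    simp only [h1, h2]
  · obtain ⟨δ, hδ, hb⟩ := trapezoidal_sums_converge_of_increment
      (p := fun u => f (a (c u)) (g (c u))) (g := fun u => g (c u)) ht0 hT ε hε
    refine ⟨δ, hδ, fun n pts _ h0 hn hmono hmesh => ?_⟩
    have hmon := le_of_forall_lt_succ hmono
    have hcp : ∀ k ≤ n, c (pts k) = pts k := fun k hk =>
      hcid _ ⟨h0 ▸ hmon 0 k (by omega) hk, (hmon k n hk le_rfl).trans (hn ▸ ht1)⟩
    convert hb n pts h0 hn hmono hmesh using 3
    refine Finset.sum_congr rfl fun k hk => ?_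
    have hk : k < n := Finset.mem_range.1 hk
    simp only [hcp k hk.le, hcp (k + 1) hk]
end
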